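/- The subspace gl_+(∞) ⊆ L_L spanned by the elements E_{i,j} = Z_{i,j} − Z_{i+1,j+1}, i, j ∈ ℤ_{≥0}, is a Lie ideal of L_L: for every x ∈ L_L and every y ∈ gl_+(∞), the bracket [x, y] lies in gl_+(∞). -/

import Mathlib

/- The ladder insertion-elimination Lie algebra `L_L` of Mencattini–Kreimer,
realized as the complex vector space of finitely supported functions `ℕ × ℕ → ℂ`,
with basis elements `Z n m = single (n, m) 1` and the bilinear bracket determined
on basis elements by formula (e1). -/

noncomputable section

/-- The underlying vector space of the ladder insertion-elimination Lie algebra. -/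
abbrev LL : Type := (ℕ × ℕ) →₀ ℂ

/-- The basis element `Z_{n,m}`. -/
def Z (n m : ℕ) : LL := Finsupp.single (n, m) 1

/-- `Θ(k) = 1` if `k ≥ 0`, and `0` otherwise. -/
def theta (k : ℤ) : ℂ := if 0 ≤ k then 1 else 0

/-- The Kronecker delta `δ_{n,m}`. -/
def kdelta (n m : ℕ) : ℂ := if n = m then 1 else 0

/-- Formula (e1) for the bracket `[Z_{n,m}, Z_{l,s}]` on basis elements, where
`p = (n, m)` and `q = (l, s)`.  (The natural subtractions occurring in the indices
are truncated, but every such term is multiplied by a `theta` coefficient which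
vanishes whenever truncation would occur.) -/
def zb (p q : ℕ × ℕ) : LL :=
  theta ((q.1 : ℤ) - p.2) • Z (q.1 - p.2 + p.1) q.2
    - theta ((q.2 : ℤ) - p.1) • Z q.1 (q.2 - p.1 + p.2)
    - theta ((p.1 : ℤ) - q.2) • Z (p.1 - q.2 + q.1) p.2
    + theta ((p.2 : ℤ) - q.1) • Z p.1 (p.2 - q.1 + q.2)
    - kdelta p.2 q.1 • Z p.1 q.2 + kdelta p.1 q.2 • Z q.1 p.2

/-- The bilinear extension of formula (e1) to all of `L_L`. -/
def br (x y : LL) : LL :=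
  x.sum fun p a => y.sum fun q b => (a * b) • zb p q

end

/-- The element `E_{i,j} = Z_{i,j} − Z_{i+1,j+1}` of `L_L`. -/
noncomputable def E (i j : ℕ) : LL := Z i j - Z (i + 1) (j + 1)

/-- `gl_+(∞)`, the span of the elements `E_{i,j}`. -/
noncomputable def glInf : Submodule ℂ LL :=
  Submodule.span ℂ {x : LL | ∃ i j : ℕ, x = E i j}

/-! `L_L` is the commutator Lie algebra of the algebra of the bicyclic monoid
`⟨a, b ∣ b * a = 1⟩`, with `Z_{n,m} = a ^ n * b ^ m`. The monoid is graded by `n - m`, so `p * q`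
and `q * p` have the same degree, while `E_{i,j}` is the difference of consecutive words of degree
`i - j`. Hence the difference of any two words of equal degree telescopes, up to sign, into a sum
of elements `E_{i,j}`, and every commutator lies in `gl_+(∞)`. -/

/-- The product of the bicyclic monoid `⟨a, b ∣ b * a = 1⟩`, the pair `(n, m)` encoding the normal
form `a ^ n * b ^ m`; it exhibits the bracket of `L_L` as a commutator. At least one of the two
truncated subtractions is zero. -/
def bicyclicMul (p q : ℕ × ℕ) : ℕ × ℕ := (p.1 + (q.1 - p.2), q.2 + (p.2 - q.1))

/-- The degree `n - m` of the word `a ^ n * b ^ m`, which is the grading of `L_L` used to compare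
basis elements modulo `gl_+(∞)`. -/
def degree (p : ℕ × ℕ) : ℤ := (p.1 : ℤ) - p.2

theorem degree_bicyclicMul (p q : ℕ × ℕ) : degree (bicyclicMul p q) = degree p + degree q := by
  simp only [degree, bicyclicMul]
  omega

theorem E_mem_glInf (i j : ℕ) : E i j ∈ glInf :=
  Submodule.subset_span ⟨i, j, rfl⟩

theorem Z_sub_Z_add_eq_sum_E (i j k : ℕ) :
    Z i j - Z (i + k) (j + k) = ∑ t ∈ Finset.range k, E (i + t) (j + t) :=
  (Finset.sum_range_sub' (fun t => Z (i + t) (j + t)) k).symm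

theorem Z_sub_Z_add_mem_glInf (i j k : ℕ) : Z i j - Z (i + k) (j + k) ∈ glInf := by
  rw [Z_sub_Z_add_eq_sum_E]
  exact glInf.sum_mem fun t _ => E_mem_glInf (i + t) (j + t)

theorem Z_sub_Z_mem_glInf_of_degree_eq {p q : ℕ × ℕ} (h : degree p = degree q) :
    Z p.1 p.2 - Z q.1 q.2 ∈ glInf := by
  wlog hpq : p.1 ≤ q.1 generalizing p q
  · rw [← neg_sub]
    exact glInf.neg_mem (this h.symm (Nat.le_of_not_le hpq))
  obtain ⟨k, hk₁⟩ := Nat.exists_eq_add_of_le hpq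
  have hk₂ : q.2 = p.2 + k := by
    simp only [degree] at h
    omega
  rw [hk₁, hk₂]
  exact Z_sub_Z_add_mem_glInf p.1 p.2 k

/-- When `p.2 = q.1` both `theta` terms equal the product; the `kdelta` term removes one copy. -/
theorem Z_bicyclicMul (p q : ℕ × ℕ) :
    Z (bicyclicMul p q).1 (bicyclicMul p q).2 =
      theta ((q.1 : ℤ) - p.2) • Z (q.1 - p.2 + p.1) q.2
        + theta ((p.2 : ℤ) - q.1) • Z p.1 (p.2 - q.1 + q.2)
        - kdelta p.2 q.1 • Z p.1 q.2 := by
  rcases lt_trichotomy p.2 q.1 with h | h | h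
  · simp [bicyclicMul, theta, kdelta, h.le, h.not_ge, h.ne, Nat.sub_eq_zero_of_le, add_comm]
  · simp [bicyclicMul, theta, kdelta, h]
  · simp [bicyclicMul, theta, kdelta, h.le, h.not_ge, h.ne', Nat.sub_eq_zero_of_le, add_comm]

theorem kdelta_comm (n m : ℕ) : kdelta n m = kdelta m n := by
  simp only [kdelta, eq_comm]

theorem zb_eq_commutator (p q : ℕ × ℕ) :
    zb p q = Z (bicyclicMul p q).1 (bicyclicMul p q).2
      - Z (bicyclicMul q p).1 (bicyclicMul q p).2 := by
  rw [Z_bicyclicMul, Z_bicyclicMul, zb, kdelta_comm q.2]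
  abel

theorem zb_mem_glInf (p q : ℕ × ℕ) : zb p q ∈ glInf := by
  rw [zb_eq_commutator]
  apply Z_sub_Z_mem_glInf_of_degree_eq
  rw [degree_bicyclicMul, degree_bicyclicMul, add_comm]

theorem glInf_is_ideal_general (x y : LL) : br x y ∈ glInf :=
  glInf.sum_mem fun p _ => glInf.sum_mem fun q _ => glInf.smul_mem _ (zb_mem_glInf p q)

/-- `gl_+(∞)` is a Lie ideal of `L_L`. -/
theorem glInf_is_ideal :
    ∀ x y : LL, y ∈ glInf → br x y ∈ glInf :=
  fun x y _ => glInf_is_ideal_general x y
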